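/- For all positive integers c and n, every c-closed graph on n vertices has at most 3^{(c-1)/3} · n^2 maximal cliques. -/

import Mathlib

/-- A graph `G` is `c`-closed if whenever two distinct vertices have at least `c`
common neighbors, they are adjacent. -/
def CClosed {V : Type*} (c : ℕ) (G : SimpleGraph V) : Prop :=
  ∀ u w : V, u ≠ w → c ≤ (G.neighborSet u ∩ G.neighborSet w).ncard → G.Adj u w

/-- `K` is a maximal clique of `G`: a clique not properly contained in any other clique. -/
def IsMaxClique {V : Type*} (G : SimpleGraph V) (K : Set V) : Prop :=
  G.IsClique K ∧ ∀ K' : Set V, G.IsClique K' → K ⊆ K' → K = K'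

/-!
Induct on the vertex set. When a vertex `v` is added to `S`, deleting `v` is injective on the
maximal cliques `K` of `insert v S`, and the result is a maximal clique of `S` unless some `u ∈ S`
is adjacent to all of `K \ {v}`. In that case `u` is not adjacent to `v`, so `K \ {v}` is a maximal
clique of the common neighborhood of `u` and `v`, which has at most `c - 1` vertices. By the theorem
of Moon and Moser each such `u` accounts for at most `3 ^ ((c - 1) / 3)` cliques, so a step adds at
most `|S| * 3 ^ ((c - 1) / 3)` of them.
-/

open Finset

section MaxCliquesIn

variable {V : Type*} {G : SimpleGraph V} {S T K : Finset V}

open Classical in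
/-- The maximal cliques of the subgraph of `G` induced on `S`. They are kept as finsets of vertices
of `G`, so that cliques of different induced subgraphs can be compared. -/
noncomputable def maxCliquesIn (G : SimpleGraph V) (S : Finset V) : Finset (Finset V) :=
  {K ∈ S.powerset | Maximal (fun L : Finset V ↦ L ⊆ S ∧ G.IsClique L) K}

theorem mem_maxCliquesIn :
    K ∈ maxCliquesIn G S ↔ Maximal (fun L : Finset V ↦ L ⊆ S ∧ G.IsClique L) K := by
  simpa only [maxCliquesIn, mem_filter, mem_powerset] using and_iff_right_of_imp fun h ↦ h.prop.1

theorem mem_maxCliquesIn_iff_forall_exists_not_adj :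
    K ∈ maxCliquesIn G S ↔ K ⊆ S ∧ G.IsClique K ∧ ∀ v ∈ S, ∃ u ∈ K, ¬ G.Adj v u := by
  classical
  rw [mem_maxCliquesIn, Finset.maximal_iff_forall_insert
    fun _ _ hL h ↦ ⟨h.trans hL.1, hL.2.subset (coe_subset.2 h)⟩, and_assoc]
  refine and_congr_right fun hKS ↦ and_congr_right fun hK ↦
    ⟨fun h v hvS ↦ ?_, fun h v hvK ⟨hvKS, hvK'⟩ ↦ ?_⟩
  · by_contra! hv
    refine h v (fun hvK ↦ (hv v hvK).ne rfl) ⟨insert_subset hvS hKS, ?_⟩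
    rw [coe_insert]
    exact hK.insert fun u hu _ ↦ hv u hu
  · obtain ⟨u, huK, hvu⟩ := h v (hvKS (mem_insert_self v K))
    exact hvu (hvK' (by simp) (by simp [huK]) fun h ↦ hvK (h ▸ huK))

theorem mem_maxCliquesIn_of_subset (hK : K ∈ maxCliquesIn G S) (hTS : T ⊆ S) (hKT : K ⊆ T) :
    K ∈ maxCliquesIn G T := by
  rw [mem_maxCliquesIn] at hK ⊢
  exact hK.mono (fun _ hL ↦ ⟨hL.1.trans hTS, hL.2⟩) ⟨hKT, hK.prop.2⟩

theorem card_maxCliquesIn_empty : #(maxCliquesIn G ∅) = 1 := by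
  rw [card_eq_one]
  exact ⟨∅, by ext K; simp +contextual [mem_maxCliquesIn_iff_forall_exists_not_adj]⟩

theorem ncard_isMaxClique_eq_card_maxCliquesIn_univ [Fintype V] :
    {K : Set V | IsMaxClique G K}.ncard = #(maxCliquesIn G univ) := by
  rw [← Set.ncard_coe_finset, ← Set.ncard_image_of_injective _ coe_injective]
  congr 1
  ext K
  lift K to Finset V using K.toFinite
  simp only [Set.mem_ofPred_eq, IsMaxClique, Set.mem_image, mem_coe, coe_inj, exists_eq_right,
    mem_maxCliquesIn, Maximal, subset_univ, true_and]
  refine and_congr_right fun _ ↦ ⟨fun h L hL hKL ↦ ?_, fun h L hL hKL ↦ ?_⟩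
  · exact (coe_injective (h L hL (coe_subset.2 hKL))).ge
  · lift L to Finset V using L.toFinite
    exact hKL.antisymm (coe_subset.2 (h hL (coe_subset.1 hKL)))

section Erase

variable [DecidableEq V]

theorem erase_injOn_maxCliquesIn (v : V) :
    Set.InjOn (fun K ↦ K.erase v) (maxCliquesIn G S : Set (Finset V)) := by
  have eq_of_mem {K L : Finset V} (hK : K ∈ maxCliquesIn G S) (hL : L ∈ maxCliquesIn G S)
      (h : K.erase v = L.erase v) (hv : v ∈ K) : L = K := by
    rw [mem_maxCliquesIn] at hK hL
    have hLK : L ⊆ K := by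
      rw [← insert_erase hv, h]
      exact insert_erase_subset v L
    exact hL.eq_of_le hK.prop hLK
  intro K hK L hL h
  by_cases hvK : v ∈ K
  · exact (eq_of_mem hK hL h hvK).symm
  by_cases hvL : v ∈ L
  · exact eq_of_mem hL hK h.symm hvL
  · simpa only [erase_eq_of_notMem hvK, erase_eq_of_notMem hvL] using h

variable [DecidableRel G.Adj]

theorem erase_mem_maxCliquesIn_filter_adj {w : V} (hK : K ∈ maxCliquesIn G S) (hw : w ∈ K) :
    K.erase w ∈ maxCliquesIn G {x ∈ S | G.Adj w x} := by
  rw [mem_maxCliquesIn_iff_forall_exists_not_adj] at hK ⊢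
  obtain ⟨hKS, hclique, hmax⟩ := hK
  refine ⟨fun x hx ↦ ?_, hclique.subset (coe_subset.2 (erase_subset w K)), fun x hx ↦ ?_⟩
  · obtain ⟨hxw, hxK⟩ := mem_erase.1 hx
    exact mem_filter.2 ⟨hKS hxK, hclique hw hxK hxw.symm⟩
  · obtain ⟨hxS, hwx⟩ := mem_filter.1 hx
    obtain ⟨u, huK, hxu⟩ := hmax x hxS
    exact ⟨u, mem_erase.2 ⟨fun huw ↦ hxu (huw ▸ hwx.symm), huK⟩, hxu⟩

theorem card_filter_mem_maxCliquesIn_le (w : V) :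
    #{K ∈ maxCliquesIn G S | w ∈ K} ≤ #(maxCliquesIn G {x ∈ S | G.Adj w x}) := by
  refine card_le_card_of_injOn (fun K ↦ K.erase w) (fun K hK ↦ ?_)
    ((erase_injOn_maxCliquesIn w).mono (coe_subset.2 (filter_subset _ _)))
  obtain ⟨hK, hw⟩ := mem_filter.1 hK
  exact erase_mem_maxCliquesIn_filter_adj hK hw

theorem erase_mem_maxCliquesIn_or_exists_of_mem_insert {v : V}
    (hK : K ∈ maxCliquesIn G (insert v S)) :
    K.erase v ∈ maxCliquesIn G S ∨
      ∃ u ∈ S, ¬ G.Adj u v ∧ K.erase v ∈ maxCliquesIn G {x ∈ S | G.Adj u x ∧ G.Adj v x} := by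
  obtain ⟨hKS, hclique, hmax⟩ := mem_maxCliquesIn_iff_forall_exists_not_adj.1 hK
  have hKS' : K.erase v ⊆ S := subset_insert_iff.1 hKS
  rw [or_iff_not_imp_left]
  intro hnot
  obtain ⟨u, huS, hu⟩ : ∃ u ∈ S, ∀ x ∈ K.erase v, G.Adj u x := by
    by_contra! h
    exact hnot (mem_maxCliquesIn_iff_forall_exists_not_adj.2
      ⟨hKS', hclique.subset (coe_subset.2 (erase_subset v K)), h⟩)
  obtain ⟨hvK, huv⟩ : v ∈ K ∧ ¬ G.Adj u v := by
    obtain ⟨y, hyK, huy⟩ := hmax u (mem_insert_of_mem huS)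
    obtain rfl : y = v := by_contra fun hyv ↦ huy (hu y (mem_erase.2 ⟨hyv, hyK⟩))
    exact ⟨hyK, huy⟩
  have hKv := erase_mem_maxCliquesIn_filter_adj hK hvK
  refine ⟨u, huS, huv, mem_maxCliquesIn_of_subset hKv (fun x hx ↦ ?_) fun x hx ↦ ?_⟩
  · obtain ⟨hxS, -, hvx⟩ := mem_filter.1 hx
    exact mem_filter.2 ⟨mem_insert_of_mem hxS, hvx⟩
  · have hvx := (mem_filter.1 ((mem_maxCliquesIn.1 hKv).prop.1 hx)).2
    exact mem_filter.2 ⟨hKS' hx, hu x hx, hvx⟩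

theorem card_maxCliquesIn_insert_le (v : V) :
    #(maxCliquesIn G (insert v S)) ≤ #(maxCliquesIn G S) +
      ∑ u ∈ S with ¬ G.Adj u v, #(maxCliquesIn G {x ∈ S | G.Adj u x ∧ G.Adj v x}) := by
  calc #(maxCliquesIn G (insert v S))
      ≤ #(maxCliquesIn G S ∪ {u ∈ S | ¬ G.Adj u v}.biUnion
          fun u ↦ maxCliquesIn G {x ∈ S | G.Adj u x ∧ G.Adj v x}) :=
        card_le_card_of_injOn (fun K ↦ K.erase v)
          (fun K hK ↦ by
            simpa [and_assoc] using erase_mem_maxCliquesIn_or_exists_of_mem_insert hK)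
          (erase_injOn_maxCliquesIn v)
    _ ≤ _ := (card_union_le _ _).trans (by gcongr; exact card_biUnion_le)

end Erase

theorem pow_three_le_three_pow (k : ℕ) : k ^ 3 ≤ 3 ^ k := by
  obtain hk | hk := lt_or_ge k 3
  · interval_cases k <;> norm_num
  induction k, hk using Nat.le_induction with
  | base => rfl
  | succ k hk ih =>
    calc (k + 1) ^ 3 ≤ k ^ 3 * 3 := by nlinarith [sq_nonneg k]
      _ ≤ 3 ^ k * 3 := by gcongr
      _ = 3 ^ (k + 1) := (pow_succ 3 k).symm

theorem natCast_le_three_rpow_div_three (k : ℕ) : (k : ℝ) ≤ 3 ^ ((k : ℝ) / 3) := by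
  refine le_of_pow_le_pow_left₀ three_ne_zero (by positivity) ?_
  calc (k : ℝ) ^ 3 ≤ 3 ^ k := mod_cast pow_three_le_three_pow k
    _ = ((3 : ℝ) ^ ((k : ℝ) / 3)) ^ 3 := by
      rw [← Real.rpow_mul_natCast (by norm_num), Nat.cast_ofNat, div_mul_cancel₀ _ (by norm_num),
        Real.rpow_natCast]

theorem card_maxCliquesIn_le_sum [DecidableRel G.Adj] {v : V} (hv : v ∈ S) :
    #(maxCliquesIn G S) ≤
      ∑ w ∈ S with ¬ G.Adj v w, #(maxCliquesIn G {x ∈ S | G.Adj w x}) := by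
  classical
  have hcover : maxCliquesIn G S ⊆
      {w ∈ S | ¬ G.Adj v w}.biUnion fun w ↦ {K ∈ maxCliquesIn G S | w ∈ K} := by
    intro K hK
    obtain ⟨hKS, -, hmax⟩ := mem_maxCliquesIn_iff_forall_exists_not_adj.1 hK
    obtain ⟨w, hwK, hvw⟩ := hmax v hv
    exact mem_biUnion.2 ⟨w, mem_filter.2 ⟨hKS hwK, hvw⟩, mem_filter.2 ⟨hK, hwK⟩⟩
  calc #(maxCliquesIn G S)
      ≤ ∑ w ∈ S with ¬ G.Adj v w, #{K ∈ maxCliquesIn G S | w ∈ K} :=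
        (card_le_card hcover).trans card_biUnion_le
    _ ≤ _ := sum_le_sum fun w _ ↦ card_filter_mem_maxCliquesIn_le w

theorem card_maxCliquesIn_le_three_rpow (G : SimpleGraph V) (S : Finset V) :
    (#(maxCliquesIn G S) : ℝ) ≤ 3 ^ ((#S : ℝ) / 3) := by
  classical
  induction S using Finset.strongInduction with
  | H S ih =>
  obtain rfl | hS := S.eq_empty_or_nonempty
  · simp [card_maxCliquesIn_empty]
  -- Every maximal clique contains one of the `k` non-neighbors of `v`. Minimality of `k` leaves at
  -- most `#S - k` vertices to choose from in each of these `k` branches, and `k ≤ 3 ^ (k / 3)`.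
  obtain ⟨v, hv, hmin⟩ := S.exists_min_image (fun w ↦ #{x ∈ S | ¬ G.Adj w x}) hS
  set k := #{x ∈ S | ¬ G.Adj v x}
  have hbranch (w : V) (hw : w ∈ S) :
      (#(maxCliquesIn G {x ∈ S | G.Adj w x}) : ℝ) ≤ 3 ^ (((#S : ℝ) - k) / 3) := by
    have hcard : (#{x ∈ S | G.Adj w x} : ℝ) ≤ #S - k := by
      rw [le_sub_iff_add_le, ← card_filter_add_card_filter_not (s := S) (G.Adj w)]
      exact_mod_cast Nat.add_le_add_left (hmin w hw) _
    refine (ih _ (filter_ssubset.2 ⟨w, hw, G.irrefl⟩)).trans ?_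
    gcongr
    norm_num
  calc (#(maxCliquesIn G S) : ℝ)
      ≤ ∑ w ∈ S with ¬ G.Adj v w, (#(maxCliquesIn G {x ∈ S | G.Adj w x}) : ℝ) :=
        mod_cast card_maxCliquesIn_le_sum hv
    _ ≤ k * 3 ^ (((#S : ℝ) - k) / 3) := by
        rw [← nsmul_eq_mul]
        exact sum_le_card_nsmul _ _ _ fun w hw ↦ hbranch w (mem_filter.1 hw).1
    _ ≤ 3 ^ ((k : ℝ) / 3) * 3 ^ (((#S : ℝ) - k) / 3) := by
        gcongr
        exact natCast_le_three_rpow_div_three k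
    _ = 3 ^ ((#S : ℝ) / 3) := by
        rw [← Real.rpow_add (by norm_num)]
        ring_nf

theorem card_maxCliquesIn_le_of_encard_commonNeighbors_le {d : ℕ}
    (hd : ∀ u v, u ≠ v → ¬ G.Adj u v → (G.commonNeighbors u v).encard ≤ d) (S : Finset V) :
    (#(maxCliquesIn G S) : ℝ) ≤ 3 ^ ((d : ℝ) / 3) * ((#S).choose 2 + 1) := by
  classical
  induction S using Finset.induction_on with
  | empty => simpa [card_maxCliquesIn_empty] using Real.one_le_rpow (by norm_num) (by positivity)
  | insert v S hvS ih =>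
    have hnew (u : V) (hu : u ∈ ({u ∈ S | ¬ G.Adj u v} : Finset V)) :
        (#(maxCliquesIn G {x ∈ S | G.Adj u x ∧ G.Adj v x}) : ℝ) ≤ 3 ^ ((d : ℝ) / 3) := by
      obtain ⟨huS, huv⟩ := mem_filter.1 hu
      have hcard : #{x ∈ S | G.Adj u x ∧ G.Adj v x} ≤ d := by
        rw [← Nat.cast_le (α := ℕ∞), ← Set.encard_coe_eq_coe_finsetCard]
        refine (Set.encard_le_encard fun x hx ↦ ?_).trans (hd u v (by grind) huv)
        exact (mem_filter.1 hx).2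
      refine (card_maxCliquesIn_le_three_rpow G _).trans ?_
      gcongr
      norm_num
    calc (#(maxCliquesIn G (insert v S)) : ℝ)
        ≤ #(maxCliquesIn G S) +
            ∑ u ∈ S with ¬ G.Adj u v, (#(maxCliquesIn G {x ∈ S | G.Adj u x ∧ G.Adj v x}) : ℝ) :=
          mod_cast card_maxCliquesIn_insert_le v
      _ ≤ 3 ^ ((d : ℝ) / 3) * ((#S).choose 2 + 1) + #S * 3 ^ ((d : ℝ) / 3) := by
          refine add_le_add ih ((sum_le_card_nsmul _ _ _ hnew).trans ?_)
          rw [nsmul_eq_mul]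
          gcongr
          exact filter_subset _ _
      _ = 3 ^ ((d : ℝ) / 3) * ((#(insert v S)).choose 2 + 1) := by
          rw [card_insert_of_notMem hvS, Nat.choose_succ_succ', Nat.choose_one_right]
          push_cast
          ring

theorem CClosed.encard_commonNeighbors_lt [Finite V] {c : ℕ} (hG : CClosed c G) {u v : V}
    (hne : u ≠ v) (huv : ¬ G.Adj u v) : (G.commonNeighbors u v).encard < c := by
  rw [← (Set.toFinite _).cast_ncard_eq, Nat.cast_lt]
  exact lt_of_not_ge fun h ↦ huv (hG u v hne h)

theorem choose_two_add_one_le_sq {n : ℕ} (hn : 0 < n) : n.choose 2 + 1 ≤ n ^ 2 := by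
  obtain ⟨m, rfl⟩ := Nat.exists_eq_add_one.2 hn
  rw [Nat.choose_two_right, Nat.add_sub_cancel]
  nlinarith [Nat.div_le_self ((m + 1) * m) 2]

end MaxCliquesIn

/-- Every `c`-closed graph on `n` vertices has at most `3 ^ ((c - 1)/3) * n ^ 2`
maximal cliques. -/
theorem cClosed_card_maxCliques_le {V : Type*} [Fintype V] {c n : ℕ}
    (hc : 0 < c) (hn : 0 < n) (G : SimpleGraph V)
    (hcard : Fintype.card V = n) (hG : CClosed c G) :
    ({K : Set V | IsMaxClique G K}.ncard : ℝ) ≤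
      3 ^ (((c : ℝ) - 1) / 3) * (n : ℝ) ^ 2 := by
  obtain ⟨d, rfl⟩ := Nat.exists_eq_add_one.2 hc
  have hd (u v : V) (hne : u ≠ v) (huv : ¬ G.Adj u v) : (G.commonNeighbors u v).encard ≤ d :=
    Order.le_of_lt_add_one (mod_cast hG.encard_commonNeighbors_lt hne huv)
  calc ({K : Set V | IsMaxClique G K}.ncard : ℝ)
      = #(maxCliquesIn G univ) := mod_cast ncard_isMaxClique_eq_card_maxCliquesIn_univ
    _ ≤ 3 ^ ((d : ℝ) / 3) * (n.choose 2 + 1) := by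
        simpa only [card_univ, hcard] using
          card_maxCliquesIn_le_of_encard_commonNeighbors_le hd univ
    _ ≤ 3 ^ ((((d + 1 : ℕ) : ℝ) - 1) / 3) * (n : ℝ) ^ 2 := by
        rw [Nat.cast_add_one, add_sub_cancel_right]
        gcongr
        exact_mod_cast choose_two_add_one_le_sq hn
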